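/- Let 𝔛 ⊂ ℝ^d be a compact set and let (X_t)_{t∈𝔛} be a real-valued stochastic process on a probability space (Ω, F, P) such that: (i) the process is centered Gaussian, i.e., for every finite collection t_1, …, t_m ∈ 𝔛 and reals c_1, …, c_m, the random variable Σ_{i=1}^m c_i X_{t_i} has a centered Gaussian distribution N(0, v) for some v ≥ 0; (ii) for P-almost every ω the sample path t ↦ X_t(ω) is continuous on 𝔛; (iii) there is a constant C such that E(X_s − X_t)² ≤ C‖s − t‖² for all s, t ∈ 𝔛, where ‖·‖ is the Euclidean norm; (iv) σ² := sup_{t∈𝔛} E(X_t²) satisfies 0 < σ² < ∞. Then there exist constants K and c > 0 such that for all M > 0, P(sup_{t∈𝔛} |X_t| > M) ≤ K e^{−cM²/σ²}. -/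

import Mathlib

open MeasureTheory ProbabilityTheory

/-!
Fernique's argument bounds the Gaussian tail of the norm of a centered Gaussian vector in terms of
one radius `a` with `P (‖Y‖ ≤ a) > 1/2` and of nothing else, in particular not of the dimension.
A process with bounded paths stays within some `a` with probability above `1/2`, and that radius
serves all its finite-dimensional marginals at once, so the bound passes to the supremum over a
countable dense set of times, which by continuity is the supremum over all times.
-/

open scoped ENNReal

section Fernique

/-- The constant in Fernique's bound
`∫ exp (Fernique.logRatio c * a⁻¹ ^ 2 * ‖x‖ ^ 2) ∂μ ≤ ferniqueConst c`, valid whenever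
`2⁻¹ < c ≤ μ {x | ‖x‖ ≤ a}`; the form of the expression is that of
`lintegral_exp_mul_sq_norm_le_of_map_rotation_eq_self`. -/
noncomputable def ferniqueConst (c : ℝ≥0∞) : ℝ≥0∞ :=
  ENNReal.ofReal (Real.exp (Fernique.logRatio c)) +
    ∑' n : ℕ, ENNReal.ofReal (Real.exp (-2⁻¹ * Real.log (c / (1 - c)).toReal * 2 ^ n))

lemma ferniqueConst_lt_top {c : ℝ≥0∞} (hc_gt : 2⁻¹ < c) (hc_lt : c < 1) :
    ferniqueConst c < ∞ := by
  have hlog : 0 < Real.log (c / (1 - c)).toReal := by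
    have hratio := Fernique.logRatio_pos hc_gt hc_lt
    rw [Fernique.logRatio, div_pos_iff_of_pos_right (by positivity)] at hratio
    rwa [ENNReal.toReal_div]
  refine ENNReal.add_lt_top.2 ⟨ENNReal.ofReal_lt_top, Summable.tsum_ofReal_lt_top ?_⟩
  exact Real.summable_exp_nat_mul_of_ge (by linarith)
    fun n ↦ mod_cast (Nat.lt_pow_self one_lt_two).le

lemma measure_lt_norm_le_lintegral_exp_mul_sq_div {E : Type*} [SeminormedAddCommGroup E]
    [MeasurableSpace E] [OpensMeasurableSpace E] (μ : Measure E)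
    {b M : ℝ} (hb : 0 ≤ b) (hM : 0 ≤ M) :
    μ {x | M < ‖x‖} ≤ (∫⁻ x, ENNReal.ofReal (Real.exp (b * ‖x‖ ^ 2)) ∂μ) /
      ENNReal.ofReal (Real.exp (b * M ^ 2)) := by
  refine (measure_mono fun x (hx : M < ‖x‖) ↦ ?_).trans <|
    meas_ge_le_lintegral_div (by fun_prop) (by simp [Real.exp_pos]) ENNReal.ofReal_ne_top
  rw [Set.mem_ofPred_eq]
  gcongr

variable {E : Type*} [MeasurableSpace E] {a M : ℝ} {c : ℝ≥0∞}

lemma measure_lt_norm_le_of_map_rotation_eq_self [SeminormedAddCommGroup E] [NormedSpace ℝ E]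
    [SecondCountableTopology E] [BorelSpace E] {μ : Measure E} [IsProbabilityMeasure μ]
    (h_rot : (μ.prod μ).map (ContinuousLinearMap.rotation (-(Real.pi / 4))) = μ.prod μ)
    (hc : c ≤ μ {x | ‖x‖ ≤ a}) (hc_gt : 2⁻¹ < c) (hM : 0 ≤ M) :
    μ {x | M < ‖x‖} ≤ ferniqueConst c *
      ENNReal.ofReal (Real.exp (-(Fernique.logRatio c * a⁻¹ ^ 2 * M ^ 2))) := by
  have hb : 0 ≤ Fernique.logRatio c * a⁻¹ ^ 2 :=
    mul_nonneg (Fernique.logRatio_nonneg hc_gt.le (hc.trans prob_le_one)) (by positivity)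
  refine (measure_lt_norm_le_lintegral_exp_mul_sq_div μ hb hM).trans ?_
  rw [Real.exp_neg, ENNReal.ofReal_inv_of_pos (Real.exp_pos _), ← div_eq_mul_inv]
  gcongr
  exact lintegral_exp_mul_sq_norm_le_of_map_rotation_eq_self h_rot hc hc_gt

variable [NormedAddCommGroup E] [NormedSpace ℝ E] [CompleteSpace E] [SecondCountableTopology E]
  [BorelSpace E] {Ω : Type*} [MeasurableSpace Ω] {P : Measure Ω}

lemma measure_lt_norm_le_of_hasGaussianLaw {Y : Ω → E} (hY : HasGaussianLaw Y P)
    (hY_mean : P[Y] = 0) (hc : c ≤ P {ω | ‖Y ω‖ ≤ a}) (hc_gt : 2⁻¹ < c) (hM : 0 ≤ M) :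
    P {ω | M < ‖Y ω‖} ≤ ferniqueConst c *
      ENNReal.ofReal (Real.exp (-(Fernique.logRatio c * a⁻¹ ^ 2 * M ^ 2))) := by
  have hmeas : AEMeasurable Y P := hY.aemeasurable
  have : IsGaussian (P.map Y) := hY.isGaussian_map
  have hmean : (P.map Y)[id] = 0 := by
    rw [integral_map hmeas aestronglyMeasurable_id]
    exact hY_mean
  have map_lt : P.map Y {x | M < ‖x‖} = P {ω | M < ‖Y ω‖} :=
    Measure.map_apply_of_aemeasurable hmeas (measurableSet_lt (by fun_prop) (by fun_prop))
  have map_le : P.map Y {x | ‖x‖ ≤ a} = P {ω | ‖Y ω‖ ≤ a} :=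
    Measure.map_apply_of_aemeasurable hmeas (measurableSet_le (by fun_prop) (by fun_prop))
  rw [← map_lt]
  exact measure_lt_norm_le_of_map_rotation_eq_self (IsGaussian.map_rotation_eq_self hmean _)
    (hc.trans_eq map_le.symm) hc_gt hM

variable {T : Type*} {X : T → Ω → E}

lemma measure_lt_norm_restrict_le_of_isGaussianProcess (hX : IsGaussianProcess X P)
    (hX_mean : ∀ t, P[X t] = 0) (ha : 0 ≤ a) (hc : c ≤ P {ω | ∀ t, ‖X t ω‖ ≤ a})
    (hc_gt : 2⁻¹ < c) (hM : 0 ≤ M) (I : Finset T) :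
    P {ω | M < ‖I.restrict (X · ω)‖} ≤ ferniqueConst c *
      ENNReal.ofReal (Real.exp (-(Fernique.logRatio c * a⁻¹ ^ 2 * M ^ 2))) := by
  have hmean : P[fun ω ↦ I.restrict (X · ω)] = 0 := by
    ext t
    exact (eval_integral (fun t : I ↦ (hX.hasGaussianLaw_eval t).integrable) t).trans (hX_mean t)
  have hnorm : {ω | ∀ t, ‖X t ω‖ ≤ a} ⊆ {ω | ‖I.restrict (X · ω)‖ ≤ a} :=
    fun ω hω ↦ (pi_norm_le_iff_of_nonneg ha).2 fun t ↦ hω t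
  exact measure_lt_norm_le_of_hasGaussianLaw (hX.hasGaussianLaw I) hmean
    (hc.trans (measure_mono hnorm)) hc_gt hM

lemma measure_exists_lt_norm_le_of_isGaussianProcess [Countable T] (hX : IsGaussianProcess X P)
    (hX_mean : ∀ t, P[X t] = 0) (ha : 0 ≤ a) (hc : c ≤ P {ω | ∀ t, ‖X t ω‖ ≤ a})
    (hc_gt : 2⁻¹ < c) (hM : 0 ≤ M) :
    P {ω | ∃ t, M < ‖X t ω‖} ≤ ferniqueConst c *
      ENNReal.ofReal (Real.exp (-(Fernique.logRatio c * a⁻¹ ^ 2 * M ^ 2))) := by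
  have hmono : Monotone fun I : Finset T ↦ {ω | M < ‖I.restrict (X · ω)‖} := by
    intro I J hIJ ω (hω : M < _)
    refine hω.trans_le ((pi_norm_le_iff_of_nonneg (norm_nonneg _)).2 fun t ↦ ?_)
    exact norm_le_pi_norm (J.restrict (X · ω)) ⟨t, hIJ t.2⟩
  have hsub : {ω | ∃ t, M < ‖X t ω‖} ⊆ ⋃ I : Finset T, {ω | M < ‖I.restrict (X · ω)‖} := by
    rintro ω ⟨t, ht⟩
    refine Set.mem_iUnion.2 ⟨{t}, ht.trans_le ?_⟩
    exact norm_le_pi_norm (({t} : Finset T).restrict (X · ω)) ⟨t, Finset.mem_singleton_self t⟩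
  calc P {ω | ∃ t, M < ‖X t ω‖}
      ≤ P (⋃ I : Finset T, {ω | M < ‖I.restrict (X · ω)‖}) := measure_mono hsub
    _ = ⨆ I : Finset T, P {ω | M < ‖I.restrict (X · ω)‖} := hmono.directed_le.measure_iUnion
    _ ≤ _ := iSup_le
      (measure_lt_norm_restrict_le_of_isGaussianProcess hX hX_mean ha hc hc_gt hM)

end Fernique

section Paths

variable {T E : Type*}

lemma exists_lt_measure_forall_norm_le [Norm E] {Ω : Type*} [MeasurableSpace Ω] {P : Measure Ω}
    {X : T → Ω → E} (hbdd : ∀ᵐ ω ∂P, BddAbove (Set.range fun t ↦ ‖X t ω‖))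
    {c : ℝ≥0∞} (hc : c < P Set.univ) :
    ∃ a > 0, c < P {ω | ∀ t, ‖X t ω‖ ≤ a} := by
  let A : ℕ → Set Ω := fun k ↦ {ω | ∀ t, ‖X t ω‖ ≤ k}
  have hmono : Monotone A := fun k l hkl ω hω t ↦ (hω t).trans (mod_cast hkl)
  have hunion : P (⋃ k, A k) = P Set.univ := by
    refine measure_congr (Filter.eventuallyEq_univ.2 ?_)
    filter_upwards [hbdd] with ω ⟨b, hb⟩
    obtain ⟨k, hk⟩ := exists_nat_ge b
    exact Set.mem_iUnion.2 ⟨k, fun t ↦ (hb ⟨t, rfl⟩).trans hk⟩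
  have hlim := tendsto_measure_iUnion_atTop (μ := P) hmono
  rw [hunion] at hlim
  obtain ⟨k, hk, hk_pos⟩ :=
    ((hlim.eventually_const_lt hc).and (Filter.eventually_gt_atTop 0)).exists
  exact ⟨k, mod_cast hk_pos, hk⟩

lemma exists_mem_lt_norm_of_lt_iSup [TopologicalSpace T] [SeminormedAddCommGroup E] {f : T → E}
    (hf : Continuous f) {s : Set T} (hs : Dense s) {M : ℝ} (hM : 0 ≤ M)
    (h : M < ⨆ t, ‖f t‖) : ∃ t ∈ s, M < ‖f t‖ := by
  have hne : {t | M < ‖f t‖}.Nonempty := by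
    by_contra! hempty
    exact h.not_ge (Real.iSup_le (fun t ↦ not_lt.1 (Set.eq_empty_iff_forall_notMem.1 hempty t)) hM)
  exact hs.exists_mem_open (isOpen_lt continuous_const hf.norm) hne

end Paths

section LinearCombinations

variable {Ω : Type*} [MeasurableSpace Ω] {P : Measure Ω}

lemma hasGaussianLaw_pi_of_forall_sum {ι : Type*} [Fintype ι] {Y : ι → Ω → ℝ}
    (h : ∀ c : ι → ℝ, HasGaussianLaw (fun ω ↦ ∑ i, c i * Y i ω) P) :
    HasGaussianLaw (fun ω i ↦ Y i ω) P := by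
  classical
  have hmeas : AEMeasurable (fun ω i ↦ Y i ω) P :=
    aemeasurable_pi_lambda _ fun i ↦ by
      simpa [Pi.single_apply] using (h (Pi.single i 1)).aemeasurable
  refine ⟨isGaussian_of_isGaussian_map fun L ↦ ?_⟩
  have hL : L ∘ (fun ω i ↦ Y i ω) = fun ω ↦ ∑ i, L (Pi.single i 1) * Y i ω := by
    ext ω
    rw [Function.comp_apply, pi_eq_sum_univ' fun i ↦ Y i ω, map_sum]
    simp only [map_smul, smul_eq_mul, mul_comm]
  rw [AEMeasurable.map_map_of_aemeasurable (by fun_prop) hmeas, hL]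
  exact (h _).isGaussian_map

lemma isGaussianProcess_of_forall_sum {T : Type*} {X : T → Ω → ℝ}
    (h : ∀ (m : ℕ) (t : Fin m → T) (c : Fin m → ℝ),
      HasGaussianLaw (fun ω ↦ ∑ i, c i * X (t i) ω) P) :
    IsGaussianProcess X P where
  hasGaussianLaw I := by
    refine hasGaussianLaw_pi_of_forall_sum (Y := fun t : I ↦ X t) fun c ↦ ?_
    have hsum (ω : Ω) : ∑ t : I, c t * X t ω =
        ∑ i, c (I.equivFin.symm i) * X (I.equivFin.symm i) ω :=
      (I.equivFin.symm.sum_comp fun t : I ↦ c t * X t ω).symm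
    simpa only [hsum] using h _ (fun i ↦ I.equivFin.symm i) fun i ↦ c (I.equivFin.symm i)

lemma integral_eq_of_map_eq_gaussianReal {Y : Ω → ℝ} {m : ℝ} {v : NNReal}
    (h : P.map Y = gaussianReal m v) : P[Y] = m := by
  have hmeas : AEMeasurable Y P := .of_map_ne_zero (h ▸ NeZero.ne _)
  rw [(HasLaw.mk hmeas h).integral_eq, integral_id_gaussianReal]

end LinearCombinations

theorem gaussian_process_sup_tail_bound_general
    {T : Type*} [TopologicalSpace T] [TopologicalSpace.SeparableSpace T]
    {E : Type*} [NormedAddCommGroup E] [NormedSpace ℝ E] [CompleteSpace E]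
    [SecondCountableTopology E] [MeasurableSpace E] [BorelSpace E]
    {Ω : Type*} [MeasurableSpace Ω] {P : Measure Ω} {X : T → Ω → E}
    (hX : IsGaussianProcess X P) (hX_mean : ∀ t, P[X t] = 0)
    (hcont : ∀ᵐ ω ∂P, Continuous (X · ω))
    (hbdd : ∀ᵐ ω ∂P, BddAbove (Set.range fun t ↦ ‖X t ω‖)) :
    ∃ K c : ℝ, 0 < c ∧ ∀ M ≥ (0 : ℝ),
      P {ω | M < ⨆ t, ‖X t ω‖} ≤ ENNReal.ofReal (K * Real.exp (-(c * M ^ 2))) := by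
  have : IsProbabilityMeasure P := hX.isProbabilityMeasure
  obtain ⟨p, hp_gt, hp_lt⟩ : ∃ p : ℝ≥0∞, 2⁻¹ < p ∧ p < 1 := exists_between (by simp)
  obtain ⟨a, ha, hpa⟩ := exists_lt_measure_forall_norm_le hbdd (hp_lt.trans_eq measure_univ.symm)
  obtain ⟨s, hs_count, hs_dense⟩ := TopologicalSpace.exists_countable_dense T
  have := hs_count.to_subtype
  have hratio := Fernique.logRatio_pos hp_gt hp_lt
  refine ⟨(ferniqueConst p).toReal, Fernique.logRatio p * a⁻¹ ^ 2, by positivity, fun M hM ↦ ?_⟩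
  rw [ENNReal.ofReal_mul ENNReal.toReal_nonneg,
    ENNReal.ofReal_toReal (ferniqueConst_lt_top hp_gt hp_lt).ne]
  calc P {ω | M < ⨆ t, ‖X t ω‖}
      ≤ P {ω | ∃ t : s, M < ‖X t ω‖} := by
        refine measure_mono_ae ?_
        filter_upwards [hcont] with ω hω hlt
        obtain ⟨t, hts, ht⟩ := exists_mem_lt_norm_of_lt_iSup hω hs_dense hM hlt
        exact ⟨⟨t, hts⟩, ht⟩
    _ ≤ _ := measure_exists_lt_norm_le_of_isGaussianProcess (hX.restrict s) (fun t ↦ hX_mean t)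
      ha.le (hpa.le.trans (measure_mono fun ω hω t ↦ hω t)) hp_gt hM

/-- The exponential tail bound (4.1) of Theorem 5: a centered Gaussian process on a
compact subset of ℝ^d with continuous sample paths, whose increments satisfy a
Lipschitz-type variance bound, has Gaussian-type tails for its supremum. -/
theorem gaussian_process_sup_tail_bound
    {d : ℕ} {Ω : Type*} [MeasurableSpace Ω] (P : Measure Ω) [IsProbabilityMeasure P]
    (𝔛 : Set (EuclideanSpace ℝ (Fin d))) (hcomp : IsCompact 𝔛) [Nonempty 𝔛]
    (X : 𝔛 → Ω → ℝ)
    (hgauss : ∀ (m : ℕ) (t : Fin m → 𝔛) (c : Fin m → ℝ), ∃ v : NNReal,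
      Measure.map (fun ω => ∑ i, c i * X (t i) ω) P = gaussianReal 0 v)
    (hcont : ∀ᵐ ω ∂P, Continuous (fun t : 𝔛 => X t ω))
    (C : ℝ)
    (hlip : ∀ s t : 𝔛, ∫ ω, (X s ω - X t ω) ^ 2 ∂P ≤
      C * ‖(s : EuclideanSpace ℝ (Fin d)) - (t : EuclideanSpace ℝ (Fin d))‖ ^ 2)
    (σ2 : ℝ) (hσ2 : σ2 = ⨆ t : 𝔛, ∫ ω, (X t ω) ^ 2 ∂P) (hσpos : 0 < σ2) :
    ∃ K c : ℝ, 0 < c ∧ ∀ M > (0 : ℝ),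
      P {ω | M < ⨆ t : 𝔛, |X t ω|} ≤ ENNReal.ofReal (K * Real.exp (-(c * M ^ 2) / σ2)) := by
  have : CompactSpace 𝔛 := isCompact_iff_compactSpace.1 hcomp
  have hX : IsGaussianProcess X P := isGaussianProcess_of_forall_sum fun m t c ↦ by
    obtain ⟨v, hv⟩ := hgauss m t c
    exact ⟨hv ▸ inferInstance⟩
  have hX_mean (t : 𝔛) : P[X t] = 0 := by
    obtain ⟨v, hv⟩ := hgauss 1 (fun _ ↦ t) fun _ ↦ 1
    simpa using integral_eq_of_map_eq_gaussianReal hv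
  have hbdd : ∀ᵐ ω ∂P, BddAbove (Set.range fun t ↦ ‖X t ω‖) :=
    hcont.mono fun ω hω ↦ (isCompact_range hω.norm).bddAbove
  obtain ⟨K, c, hc, htail⟩ := gaussian_process_sup_tail_bound_general hX hX_mean hcont hbdd
  refine ⟨K, c * σ2, by positivity, fun M hM ↦ (htail M hM.le).trans_eq ?_⟩
  congr 3
  field_simp
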